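/- There is a constant C > 0 such that for all m, d ∈ ℕ with m, d ≥ 2 and ⌊m/d⌋ ≥ e^6, a jittered sampling point set P of N = m^d points in [0,1)^d satisfies E[D*(P)] ≥ C · √(d·m^d) · √( (1 + log(m/d)) / (m/d) ). -/

import Mathlib

open MeasureTheory ProbabilityTheory Real

noncomputable section

/-- The axis-aligned cube `∏_i [x_i/m, x_i/m + 1/m)` of the `m`-grid partition of `[0,1)^d`. -/
def jitterCube (m d : ℕ) (x : Fin d → Fin m) : Set (Fin d → ℝ) :=
  Set.univ.pi fun i => Set.Ico ((x i : ℝ) / m) ((x i : ℝ) / m + 1 / m)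

/-- The distribution of a jittered sampling point configuration: independently, one point
uniformly distributed in each of the `m^d` cubes. -/
def jitterMeasure (m d : ℕ) : Measure ((Fin d → Fin m) → (Fin d → ℝ)) :=
  Measure.pi fun x => ((m : ENNReal) ^ d) • volume.restrict (jitterCube m d x)

open scoped Classical in
/-- Signed (non-normalized) discrepancy `|P ∩ A| - N·λ(A)` with `N = m^d` of a point
configuration `P`. -/
def jdisc (m d : ℕ) (P : (Fin d → Fin m) → (Fin d → ℝ)) (A : Set (Fin d → ℝ)) : ℝ :=
  ((Finset.univ.filter fun x => P x ∈ A).card : ℝ) - (m : ℝ) ^ d * (volume A).toReal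

/-- The anchored box `[0,y) = ∏_i [0, y_i)`. -/
def anchoredBox (d : ℕ) (y : Fin d → ℝ) : Set (Fin d → ℝ) :=
  Set.univ.pi fun i => Set.Ico 0 (y i)

/-- The (non-normalized) star discrepancy `D*(P) = sup_{y ∈ [0,1)^d} |disc([0,y))|`. -/
def starDisc (m d : ℕ) (P : (Fin d → Fin m) → (Fin d → ℝ)) : ℝ :=
  ⨆ y : {y : Fin d → ℝ // ∀ i, y i ∈ Set.Ico (0 : ℝ) 1}, |jdisc m d P (anchoredBox d y.1)|

/-- The expected star discrepancy of a jittered sampling point set of `m^d` points. -/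
def expStarDisc (m d : ℕ) : ℝ :=
  ∫ P, starDisc m d P ∂(jitterMeasure m d)

/-- One-sided anticoncentration polynomial inequality. -/
lemma poly_ineq (u : ℝ) :
    (4/10) * ((u + (3/4 * u^2 - u^4/16))/2 - 1/10 - (1/10) * u^2)
      ≤ if (1/10 : ℝ) ≤ u then 1 else 0 := by
  have habs : 3/4 * u^2 - u^4/16 ≤ |u| := by
    have h : u^2 = |u|^2 := (sq_abs u).symm
    have h4 : u^4 = |u|^4 := by
      calc u^4 = (u^2)^2 := by ring
        _ = (|u|^2)^2 := by rw [h]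
        _ = |u|^4 := by ring
    rw [h, h4]
    have h0 := abs_nonneg u
    set v := |u|
    have : v - (3/4 * v^2 - v^4/16) = v * ((v - 2)^2 * (v + 4)) / 16 := by ring
    have h2 : 0 ≤ v * ((v - 2)^2 * (v + 4)) / 16 := by positivity
    linarith
  split_ifs with h
  · rw [abs_of_nonneg (by linarith)] at habs
    nlinarith [sq_nonneg (u - 5)]
  · rcases le_total 0 u with h0 | h0
    · rw [abs_of_nonneg h0] at habs
      nlinarith [sq_nonneg u]
    · rw [abs_of_nonpos h0] at habs
      nlinarith [sq_nonneg u]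

set_option linter.unusedSectionVars false

section signs
variable {Ω ι : Type*} [MeasurableSpace Ω] {μ : Measure Ω} [IsProbabilityMeasure μ]
  {ε : ι → Ω → ℝ}

lemma sum_bdd (hs : ∀ i ω, ε i ω = 1 ∨ ε i ω = -1) (S : Finset ι) (ω : Ω) :
    |∑ i ∈ S, ε i ω| ≤ S.card := by
  calc |∑ i ∈ S, ε i ω| ≤ ∑ i ∈ S, |ε i ω| := Finset.abs_sum_le_sum_abs _ _
    _ ≤ ∑ i ∈ S, 1 := by
      apply Finset.sum_le_sum
      intro i _
      rcases hs i ω with h | h <;> simp [h]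
    _ = S.card := by simp

lemma sum_pow_integrable (hm : ∀ i, Measurable (ε i)) (hs : ∀ i ω, ε i ω = 1 ∨ ε i ω = -1)
    (S : Finset ι) (k : ℕ) : Integrable (fun ω => (∑ i ∈ S, ε i ω)^k) μ := by
  have : Measurable (fun ω => (∑ i ∈ S, ε i ω)^k) := by fun_prop
  refine Integrable.of_bound this.aestronglyMeasurable ((S.card : ℝ)^k) ?_
  refine Filter.Eventually.of_forall fun ω => ?_
  rw [norm_pow, Real.norm_eq_abs]
  gcongr
  exact sum_bdd hs S ω

lemma moments (hi : iIndepFun ε μ) (hm : ∀ i, Measurable (ε i))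
    (hs : ∀ i ω, ε i ω = 1 ∨ ε i ω = -1) (h0 : ∀ i, ∫ ω, ε i ω ∂μ = 0) (S : Finset ι) :
    ∫ ω, (∑ i ∈ S, ε i ω) ∂μ = 0 ∧ ∫ ω, (∑ i ∈ S, ε i ω)^2 ∂μ = S.card ∧
      ∫ ω, (∑ i ∈ S, ε i ω)^4 ∂μ ≤ 3 * (S.card : ℝ)^2 := by
  classical
  induction S using Finset.induction_on with
  | empty => simp
  | insert a S ha ih =>
    obtain ⟨i1, i2, i4⟩ := ih
    have hind : IndepFun (∑ j ∈ S, ε j) (ε a) μ := hi.indepFun_finsetSum_of_notMem hm ha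
    have hZ : (∑ j ∈ S, ε j) = fun ω => ∑ j ∈ S, ε j ω := by ext; simp
    rw [hZ] at hind
    have hI : ∀ k, Integrable (fun ω => (∑ i ∈ S, ε i ω)^k) μ := sum_pow_integrable hm hs S
    have hI1 : Integrable (fun ω => (∑ i ∈ S, ε i ω)) μ := by simpa using hI 1
    have hIa : Integrable (ε a) μ := by simpa using sum_pow_integrable (μ := μ) hm hs {a} 1
    have hsq : ∀ ω, (ε a ω)^2 = 1 := fun ω => by rcases hs a ω with h | h <;> simp [h]
    have hcr : ∀ k, ∫ ω, (∑ i ∈ S, ε i ω)^k * ε a ω ∂μ = 0 := by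
      intro k
      have hk : IndepFun (fun ω => (∑ i ∈ S, ε i ω)^k) (ε a) μ :=
        hind.comp (φ := fun x => x^k) (ψ := id) (by fun_prop) measurable_id
      rw [hk.integral_fun_mul_eq_mul_integral (hI k).1 hIa.1, h0, mul_zero]
    have hcrI : ∀ k, Integrable (fun ω => (∑ i ∈ S, ε i ω)^k * ε a ω) μ := by
      intro k
      refine (hI k).mul_bdd (c := 1) hIa.1 (Filter.Eventually.of_forall fun ω => ?_)
      rcases hs a ω with h | h <;> simp [h]
    refine ⟨?_, ?_, ?_⟩
    · simp_rw [Finset.sum_insert ha]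
      rw [integral_add hIa hI1, h0, i1, add_zero]
    · have : ∀ ω, (∑ i ∈ insert a S, ε i ω)^2
          = (∑ i ∈ S, ε i ω)^2 + 2 * ((∑ i ∈ S, ε i ω)^1 * ε a ω) + 1 := by
        intro ω
        rw [Finset.sum_insert ha]
        linear_combination hsq ω
      simp_rw [this]
      rw [integral_add _ (integrable_const _),
        integral_add (hI 2) ((hcrI 1).const_mul 2), integral_const_mul, hcr, i2,
        Finset.card_insert_of_notMem ha]
      · simp
      · exact (hI 2).add ((hcrI 1).const_mul 2)
    · have : ∀ ω, (∑ i ∈ insert a S, ε i ω)^4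
          = (∑ i ∈ S, ε i ω)^4 + 4 * ((∑ i ∈ S, ε i ω)^3 * ε a ω)
            + 6 * (∑ i ∈ S, ε i ω)^2 + 4 * ((∑ i ∈ S, ε i ω)^1 * ε a ω) + 1 := by
        intro ω
        rw [Finset.sum_insert ha]
        linear_combination (6 * (∑ i ∈ S, ε i ω)^2 + 4 * (∑ i ∈ S, ε i ω) * ε a ω
          + (ε a ω)^2 + 1) * hsq ω
      simp_rw [this]
      rw [integral_add _ (integrable_const _), integral_add _ ((hcrI 1).const_mul 4),
        integral_add _ ((hI 2).const_mul 6), integral_add (hI 4) ((hcrI 3).const_mul 4)]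
      · simp_rw [integral_const_mul]
        rw [hcr, hcr, i2, Finset.card_insert_of_notMem ha]
        simp
        nlinarith
      · exact (hI 4).add ((hcrI 3).const_mul 4)
      · exact ((hI 4).add ((hcrI 3).const_mul 4)).add ((hI 2).const_mul 6)
      · exact (((hI 4).add ((hcrI 3).const_mul 4)).add ((hI 2).const_mul 6)).add
          ((hcrI 1).const_mul 4)

lemma tail_one (hi : iIndepFun ε μ) (hm : ∀ i, Measurable (ε i))
    (hs : ∀ i ω, ε i ω = 1 ∨ ε i ω = -1) (h0 : ∀ i, ∫ ω, ε i ω ∂μ = 0) (S : Finset ι)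
    (hS : 0 < S.card) :
    (1/50 : ℝ) ≤ μ.real {ω | √(S.card : ℝ) / 10 ≤ ∑ i ∈ S, ε i ω} := by
  obtain ⟨i1, i2, i4⟩ := moments hi hm hs h0 S
  set n : ℝ := (S.card : ℝ) with hn
  have hn0 : 0 < n := by rw [hn]; exact_mod_cast hS
  have hr0 : 0 < √n := Real.sqrt_pos.mpr hn0
  have hr2 : √n ^ 2 = n := Real.sq_sqrt hn0.le
  set r := √n
  set Z : Ω → ℝ := fun ω => ∑ i ∈ S, ε i ω with hZ
  have hZm : Measurable Z := by fun_prop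
  set A : Set Ω := {ω | r / 10 ≤ Z ω} with hA
  have hAm : MeasurableSet A := measurableSet_le measurable_const hZm
  have hI : ∀ k, Integrable (fun ω => (Z ω)^k) μ := sum_pow_integrable hm hs S
  have hI1 : Integrable Z μ := by simpa using hI 1
  have key : ∫ ω, ((2/10/r) * Z ω + (11/100/n) * (Z ω)^2 + (-(1/80/n^2)) * (Z ω)^4
      + (-(4/100))) ∂μ ≤ ∫ ω, A.indicator (fun _ => (1:ℝ)) ω ∂μ := by
    refine integral_mono ?_ ?_ ?_
    · exact (((hI1.const_mul _).add ((hI 2).const_mul _)).add ((hI 4).const_mul _)).add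
        (integrable_const _)
    · exact (integrable_const _).indicator hAm
    · intro ω
      have h := poly_ineq (Z ω / r)
      have e : (A.indicator (fun _ => (1:ℝ)) ω) = if (1/10 : ℝ) ≤ Z ω / r then 1 else 0 := by
        by_cases hω : ω ∈ A
        · rw [Set.indicator_of_mem hω, if_pos]
          rw [le_div_iff₀ hr0]
          have : r / 10 ≤ Z ω := hω
          linarith
        · rw [Set.indicator_of_notMem hω, if_neg]
          rw [le_div_iff₀ hr0]
          intro h'
          apply hω
          show r / 10 ≤ Z ω
          linarith
      rw [← e] at h
      refine le_trans (le_of_eq ?_) h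
      have h4 : n^2 = r^4 := by rw [← hr2]; ring
      show _ = _
      simp only []
      rw [h4, ← hr2]
      field_simp
      ring
  rw [integral_add _ (integrable_const _), integral_add _ ((hI 4).const_mul _),
    integral_add (hI1.const_mul _) ((hI 2).const_mul _), integral_const_mul, integral_const_mul,
    integral_const_mul, i1, i2, integral_indicator_const _ hAm] at key
  · simp only [integral_const, probReal_univ, smul_eq_mul, mul_one, mul_zero] at key
    have : 1/80/n^2 * ∫ ω, (Z ω)^4 ∂μ ≤ 3/80 := by
      calc 1/80/n^2 * ∫ ω, (Z ω)^4 ∂μ ≤ 1/80/n^2 * (3 * n^2) := by gcongr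
        _ = 3/80 := by field_simp
    have h5 : 11/100/n * n = 11/100 := by field_simp
    rw [h5] at key
    linarith
  · exact (hI1.const_mul _).add ((hI 2).const_mul _)
  · exact ((hI1.const_mul _).add ((hI 2).const_mul _)).add ((hI 4).const_mul _)

lemma indep_sums (hi : iIndepFun ε μ) (hm : ∀ i, Measurable (ε i)) {S T : Finset ι}
    (hd : Disjoint S T) :
    IndepFun (fun ω => ∑ i ∈ S, ε i ω) (fun ω => ∑ i ∈ T, ε i ω) μ := by
  have h := hi.indepFun_finset S T hd hm
  have h2 := h.comp (φ := fun q => ∑ i, q i) (ψ := fun q => ∑ i, q i) (by fun_prop) (by fun_prop)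
  convert h2 using 1
  · ext ω; simp [Finset.sum_attach S (fun i => ε i ω)]
  · ext ω; simp [Finset.sum_attach T (fun i => ε i ω)]

lemma tail_many (hi : iIndepFun ε μ) (hm : ∀ i, Measurable (ε i))
    (hs : ∀ i ω, ε i ω = 1 ∨ ε i ω = -1) (h0 : ∀ i, ∫ ω, ε i ω ∂μ = 0) (s : ℕ) (hs0 : 0 < s)
    (k : ℕ) : ∀ (S : Finset ι), (k+1) * s ≤ S.card →
    (1/50 : ℝ)^(k+1) ≤ μ.real {ω | (k+1) * (√(s : ℝ) / 10) ≤ ∑ i ∈ S, ε i ω} := by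
  classical
  induction k with
  | zero =>
    intro S hS
    have hS' : s ≤ S.card := by simpa using hS
    have := tail_one hi hm hs h0 S (by omega)
    simp only [zero_add, pow_one]
    refine this.trans (measureReal_mono ?_)
    intro ω hω
    have hω' : √(S.card : ℝ) / 10 ≤ ∑ i ∈ S, ε i ω := hω
    have h1 : √(s : ℝ) ≤ √(S.card : ℝ) := Real.sqrt_le_sqrt (by exact_mod_cast hS')
    show (((0:ℕ):ℝ) + 1) * (√(s : ℝ) / 10) ≤ _
    push_cast
    linarith
  | succ k ih =>
    intro S hS
    obtain ⟨T, hTS, hT⟩ := Finset.exists_subset_card_eq (s := S) (n := s) (by nlinarith)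
    have hc : (k+1) * s ≤ (S \ T).card := by
      rw [Finset.card_sdiff_of_subset hTS, hT]
      have : (k + 1 + 1) * s = (k+1) * s + s := by ring
      omega
    have h1 := ih (S \ T) hc
    have h2 := tail_one hi hm hs h0 T (by omega)
    rw [hT] at h2
    have hind := indep_sums hi hm (Finset.sdiff_disjoint (s := T) (t := S))
    have h3 := hind.measure_inter_preimage_eq_mul (Set.Ici ((k+1) * (√(s : ℝ) / 10)))
      (Set.Ici (√(s : ℝ) / 10)) measurableSet_Ici measurableSet_Ici
    have h4 := congrArg ENNReal.toReal h3
    rw [ENNReal.toReal_mul] at h4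
    calc (1/50 : ℝ)^(k+1+1) = (1/50 : ℝ)^(k+1) * (1/50) := by ring
      _ ≤ _ := mul_le_mul h1 h2 (by norm_num) measureReal_nonneg
      _ = _ := h4.symm
      _ ≤ _ := measureReal_mono (by
        rintro ω ⟨ha, hb⟩
        have ha' : (k+1) * (√(s : ℝ) / 10) ≤ ∑ i ∈ S \ T, ε i ω := ha
        have hb' : (√(s : ℝ) / 10) ≤ ∑ i ∈ T, ε i ω := hb
        show ((k+1 : ℕ) + 1) * (√(s : ℝ) / 10) ≤ ∑ i ∈ S, ε i ω
        rw [← Finset.sum_sdiff hTS]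
        push_cast
        linarith)

lemma none_exceed (hi : iIndepFun ε μ) (hm : ∀ i, Measurable (ε i)) {κ : Type*}
    (S : κ → Finset ι) (hd : ∀ a b, a ≠ b → Disjoint (S a) (S b)) (t p : ℝ) 
    (hp : ∀ j, p ≤ μ.real {ω | t ≤ ∑ i ∈ S j, ε i ω}) (J : Finset κ) :
    μ.real {ω | ∀ j ∈ J, ∑ i ∈ S j, ε i ω < t} ≤ (1 - p)^J.card := by
  classical
  induction J using Finset.induction_on with
  | empty => simp
  | insert a J ha ih =>
    have hdis : Disjoint (S a) (J.biUnion S) := by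
      rw [Finset.disjoint_biUnion_right]
      intro b hb
      exact hd a b (by rintro rfl; exact ha hb)
    have h := hi.indepFun_finset (S a) (J.biUnion S) hdis hm
    set φ : (S a → ℝ) → ℝ := fun q => ∑ i, q i with hφ
    let ψ : (J.biUnion S → ℝ) → Prop := fun q =>
      ∀ j ∈ J, ∑ i ∈ S j, (if h : i ∈ J.biUnion S then q ⟨i, h⟩ else 0) < t
    have hψm : MeasurableSet {q | ψ q} := by
      have : {q | ψ q} = ⋂ j ∈ J,
        {q | ∑ i ∈ S j, (if h : i ∈ J.biUnion S then q ⟨i, h⟩ else 0) < t} := by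
        ext q; simp [ψ]
      rw [this]
      refine Finset.measurableSet_biInter _ fun j _ => measurableSet_lt ?_ measurable_const
      refine Finset.measurable_sum _ fun i _ => ?_
      split_ifs <;> fun_prop
    have h3 := h.measure_inter_preimage_eq_mul {q | φ q < t} {q | ψ q}
      (measurableSet_lt (by fun_prop) measurable_const) hψm
    have h4 := congrArg ENNReal.toReal h3
    rw [ENNReal.toReal_mul] at h4
    have e1 : ((fun ω (i : S a) => ε i ω) ⁻¹' {q | φ q < t}) = {ω | t ≤ ∑ i ∈ S a, ε i ω}ᶜ := by
      ext ω
      simp [φ, Finset.sum_attach (S a) (fun i => ε i ω)]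
    have e2 : ((fun ω (i : J.biUnion S) => ε i ω) ⁻¹' {q | ψ q})
        = {ω | ∀ j ∈ J, ∑ i ∈ S j, ε i ω < t} := by
      ext ω
      simp only [ψ, Set.mem_preimage, Set.mem_ofPred_eq]
      refine forall₂_congr fun j hj => ?_
      have : ∀ i ∈ S j, (if h : i ∈ J.biUnion S then ε i ω else 0) = ε i ω := by
        intro i hi'
        rw [dif_pos (Finset.mem_biUnion.mpr ⟨j, hj, hi'⟩)]
      rw [Finset.sum_congr rfl this]
    have e3 : {ω | ∀ j ∈ insert a J, ∑ i ∈ S j, ε i ω < t} =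
        {ω | t ≤ ∑ i ∈ S a, ε i ω}ᶜ ∩ {ω | ∀ j ∈ J, ∑ i ∈ S j, ε i ω < t} := by
      ext ω; simp
    rw [e1, e2, ← e3] at h4
    rw [Finset.card_insert_of_notMem ha, pow_succ']
    show (μ _).toReal ≤ _
    rw [h4]
    have e5 : (μ {ω | t ≤ ∑ i ∈ S a, ε i ω}ᶜ).toReal ≤ 1 - p := by
      have := probReal_compl_eq_one_sub (μ := μ) (s := {ω | t ≤ ∑ i ∈ S a, ε i ω})
        (measurableSet_le measurable_const (by fun_prop))
      have h' := hp a
      change μ.real _ ≤ _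
      linarith
    exact mul_le_mul e5 ih ENNReal.toReal_nonneg (le_trans ENNReal.toReal_nonneg e5)

lemma some_exceed (hi : iIndepFun ε μ) (hm : ∀ i, Measurable (ε i))
    (hs : ∀ i ω, ε i ω = 1 ∨ ε i ω = -1) (h0 : ∀ i, ∫ ω, ε i ω ∂μ = 0) (K n : ℕ)
    (hK : Real.exp 6 ≤ K) (hKn : K ≤ n) (S : Fin K → Finset ι)
    (hd : ∀ a b, a ≠ b → Disjoint (S a) (S b)) (hc : ∀ j, (S j).card = n) :
    (1/2 : ℝ) ≤ μ.real {ω | ∃ j, √(n * Real.log K) / 40 ≤ ∑ i ∈ S j, ε i ω} := by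
  have hK0 : (0:ℝ) < K := lt_of_lt_of_le (Real.exp_pos 6) hK
  have hL : 6 ≤ Real.log K := (Real.le_log_iff_exp_le hK0).mpr hK
  set L := Real.log K with hLdef
  set k : ℕ := ⌊L / 4⌋₊ with hk
  have hk1 : 1 ≤ k := Nat.le_floor (by push_cast; linarith)
  have hkle : (k:ℝ) ≤ L / 4 := Nat.floor_le (by linarith)
  have hklt : L / 4 < k + 1 := Nat.lt_floor_add_one _
  have hkR : (1:ℝ) ≤ k := by exact_mod_cast hk1
  have hk8 : L / 8 ≤ k := by linarith
  have hLK : L ≤ K := (Real.log_le_sub_one_of_pos hK0).trans (by linarith)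
  have hkn : k ≤ n := by
    have : (k:ℝ) ≤ K := by linarith
    have : k ≤ K := by exact_mod_cast this
    omega
  set s : ℕ := n / k with hsdef
  have hs1 : 0 < s := Nat.div_pos hkn hk1
  have hks : k * s ≤ n := Nat.mul_div_le n k
  have hks2 : n ≤ 2 * (k * s) := by
    have h1 : n < k * s + k := by
      have := Nat.lt_mul_div_succ n hk1
      rw [← hsdef] at this
      nlinarith
    nlinarith
  clear_value s k
  obtain ⟨k', rfl⟩ : ∃ k', k = k' + 1 := ⟨k - 1, by omega⟩
  have hp : ∀ j, (1 / (K:ℝ)) ≤ μ.real {ω | √(n * L) / 40 ≤ ∑ i ∈ S j, ε i ω} := by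
    intro j
    have h1 := tail_many hi hm hs h0 s hs1 k' (S j) (by rw [hc]; exact hks)
    have h2 : (1 / (K:ℝ)) ≤ (1/50 : ℝ)^(k'+1) := by
      have e4 : (50:ℝ) ≤ Real.exp 4 := by
        have := Real.exp_one_gt_d9
        have h4 : Real.exp 4 = (Real.exp 1)^4 := by rw [← Real.exp_nat_mul]; norm_num
        rw [h4]
        calc (50:ℝ) ≤ 2.7^4 := by norm_num
          _ ≤ _ := by gcongr; linarith
      have : (50:ℝ)^(k'+1) ≤ K := by
        calc (50:ℝ)^(k'+1) ≤ (Real.exp 4)^(k'+1) := by gcongr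
          _ = Real.exp ((k'+1 : ℕ) * 4) := by rw [← Real.exp_nat_mul]
          _ ≤ Real.exp L := by apply Real.exp_le_exp.mpr; linarith
          _ = K := Real.exp_log hK0
      rw [one_div_pow]
      exact one_div_le_one_div_of_le (by positivity) this
    refine h2.trans (h1.trans (measureReal_mono ?_))
    intro ω hω
    have hω' : ((k':ℝ)+1) * (√(s : ℝ) / 10) ≤ ∑ i ∈ S j, ε i ω := hω
    refine le_trans ?_ hω'
    have h3 : √(n * L) ≤ 4 * ((k'+1) * √(s:ℝ)) := by
      apply Real.sqrt_le_iff.mpr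
      constructor
      · positivity
      · rw [mul_pow, mul_pow, Real.sq_sqrt (by positivity)]
        have a1 : (n:ℝ) ≤ 2 * ((k'+1) * s) := by exact_mod_cast hks2
        push_cast at hk8
        have a2 : L ≤ 8 * (k'+1) := by linarith
        calc (n:ℝ) * L ≤ (2 * ((k'+1) * s)) * (8 * (k'+1)) := by gcongr
          _ = _ := by ring
    linarith
  have h := none_exceed hi hm S hd _ _ hp Finset.univ
  have h2 : (1 - 1/(K:ℝ))^K ≤ Real.exp (-1) :=
    Real.one_sub_div_pow_le_exp_neg (le_trans (by linarith) (hL.trans hLK))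
  have h3 : Real.exp (-1) ≤ 1/2 := by
    rw [Real.exp_neg, inv_eq_one_div]
    apply one_div_le_one_div_of_le (by norm_num)
    have := Real.exp_one_gt_d9
    linarith
  have e : {ω | ∀ j ∈ (Finset.univ : Finset (Fin K)), ∑ i ∈ S j, ε i ω < √(n * L) / 40}
      = {ω | ∃ j, √(n * L) / 40 ≤ ∑ i ∈ S j, ε i ω}ᶜ := by
    ext ω; simp
  have hmeas : MeasurableSet {ω | ∃ j, √(n * L) / 40 ≤ ∑ i ∈ S j, ε i ω} := by
    rw [Set.ofPred_exists]
    exact MeasurableSet.iUnion fun j => measurableSet_le measurable_const (by fun_prop)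
  rw [e, probReal_compl_eq_one_sub hmeas] at h
  simp only [Finset.card_univ, Fintype.card_fin] at h
  linarith

end signs

open scoped Classical in
/-- centered contribution of a cell -/
def cellG (m d : ℕ) (y : Fin d → ℝ) (x : Fin d → Fin m) (p : Fin d → ℝ) : ℝ :=
  (if p ∈ anchoredBox d y then 1 else 0)
    - (m : ℝ) ^ d * (volume (anchoredBox d y ∩ jitterCube m d x)).toReal

def cellMeas (m d : ℕ) (x : Fin d → Fin m) : Measure (Fin d → ℝ) :=
  ((m : ENNReal) ^ d) • volume.restrict (jitterCube m d x)

lemma measurableSet_cube (m d : ℕ) (x) : MeasurableSet (jitterCube m d x) :=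
  MeasurableSet.univ_pi fun _ => measurableSet_Ico

lemma measurableSet_box (d : ℕ) (y) : MeasurableSet (anchoredBox d y) :=
  MeasurableSet.univ_pi fun _ => measurableSet_Ico

lemma cellMeas_apply (m d : ℕ) (x) {A : Set (Fin d → ℝ)} (hA : MeasurableSet A) :
    (cellMeas m d x).real A = (m:ℝ)^d * (volume (A ∩ jitterCube m d x)).toReal := by
  simp [cellMeas, Measure.real, Measure.restrict_apply hA]

lemma cellMeas_prob (m d : ℕ) (hm : 0 < m) (x) : IsProbabilityMeasure (cellMeas m d x) := by
  constructor
  simp only [cellMeas, Measure.smul_apply, Measure.restrict_apply_univ, smul_eq_mul]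
  rw [jitterCube, Real.volume_pi_Ico]
  simp only [add_sub_cancel_left, Finset.prod_const, Finset.card_univ, Fintype.card_fin]
  rw [← mul_pow, one_div, ENNReal.ofReal_inv_of_pos (by exact_mod_cast hm),
    ENNReal.ofReal_natCast, ENNReal.mul_inv_cancel (by simpa using hm.ne') (by simp), one_pow]

lemma jitterMeasure_eq (m d : ℕ) : jitterMeasure m d = Measure.pi (cellMeas m d) := rfl

lemma jitter_prob (m d : ℕ) (hm : 0 < m) : IsProbabilityMeasure (jitterMeasure m d) := by
  have := cellMeas_prob m d hm
  rw [jitterMeasure_eq]; infer_instance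

lemma box_vol (d : ℕ) (y : Fin d → ℝ) (hy : ∀ i, 0 ≤ y i) :
    (volume (anchoredBox d y)).toReal = ∏ i, y i := by
  rw [anchoredBox, Real.volume_pi_Ico_toReal (a := fun _ => 0) (b := y) hy]
  simp

lemma cubes_disjoint (m d : ℕ) (hm : 0 < m) {a b : Fin d → Fin m} (h : a ≠ b) :
    Disjoint (jitterCube m d a) (jitterCube m d b) := by
  have hm' : (0:ℝ) < m := by exact_mod_cast hm
  rw [Set.disjoint_left]
  intro p ha hb
  apply h
  ext i
  have h1 := ha i (Set.mem_univ i)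
  have h2 := hb i (Set.mem_univ i)
  simp only [Set.mem_Ico, ← add_div, div_le_iff₀ hm', lt_div_iff₀ hm'] at h1 h2
  have h3 : ((a i : ℕ):ℝ) < (b i : ℕ) + 1 := by linarith
  have h4 : ((b i : ℕ):ℝ) < (a i : ℕ) + 1 := by linarith
  norm_cast at h3 h4
  omega

lemma box_subset_cubes (m d : ℕ) (hm : 0 < m) (y : Fin d → ℝ) (hy : ∀ i, y i < 1) :
    anchoredBox d y ⊆ ⋃ x ∈ (Finset.univ : Finset (Fin d → Fin m)), jitterCube m d x := by
  have hm' : (0:ℝ) < m := by exact_mod_cast hm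
  intro p hp
  have h0 : ∀ i, 0 ≤ p i := fun i => (hp i (Set.mem_univ i)).1
  have h1 : ∀ i, p i < 1 := fun i => (hp i (Set.mem_univ i)).2.trans (hy i)
  have hfl : ∀ i, ⌊p i * m⌋₊ < m := fun i => by
    rw [Nat.floor_lt (by have := h0 i; positivity)]
    have := h1 i
    nlinarith
  simp only [Set.mem_iUnion, Finset.mem_univ, exists_prop, true_and]
  refine ⟨fun i => ⟨⌊p i * m⌋₊, hfl i⟩, fun i _ => ?_⟩
  simp only [Set.mem_Ico, ← add_div, div_le_iff₀ hm', lt_div_iff₀ hm']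
  exact ⟨Nat.floor_le (by have := h0 i; positivity), Nat.lt_floor_add_one _⟩

lemma box_vol_sum (m d : ℕ) (hm : 0 < m) (y : Fin d → ℝ) (hy : ∀ i, y i < 1) :
    (volume (anchoredBox d y)).toReal
      = ∑ x : Fin d → Fin m, (volume (anchoredBox d y ∩ jitterCube m d x)).toReal := by
  have h1 : anchoredBox d y = ⋃ x ∈ (Finset.univ : Finset (Fin d → Fin m)),
      (anchoredBox d y ∩ jitterCube m d x) := by
    rw [← Set.inter_iUnion₂]
    exact (Set.inter_eq_left.mpr (box_subset_cubes m d hm y hy)).symm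
  conv_lhs => rw [h1]
  rw [measure_biUnion_finset, ENNReal.toReal_sum]
  · intro x _
    have : volume (anchoredBox d y) ≠ ⊤ := by
      rw [anchoredBox, Real.volume_pi_Ico]
      exact ENNReal.prod_ne_top (fun _ _ => ENNReal.ofReal_ne_top)
    exact ne_top_of_le_ne_top this (measure_mono Set.inter_subset_left)
  · intro a _ b _ hab
    exact (cubes_disjoint m d hm hab).mono Set.inter_subset_right Set.inter_subset_right
  · intro x _
    exact (measurableSet_box d y).inter (measurableSet_cube m d x)

lemma jdisc_eq_sum (m d : ℕ) (hm : 0 < m) (y : Fin d → ℝ) (hy : ∀ i, y i < 1)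
    (P : (Fin d → Fin m) → (Fin d → ℝ)) :
    jdisc m d P (anchoredBox d y) = ∑ x, cellG m d y x (P x) := by
  classical
  unfold jdisc cellG
  rw [Finset.sum_sub_distrib, ← Finset.mul_sum, ← box_vol_sum m d hm y hy]
  congr 1
  simp

lemma cellG_measurable (m d : ℕ) (y x) : Measurable (cellG m d y x) := by
  unfold cellG
  exact (Measurable.ite (measurableSet_box d y) measurable_const measurable_const).sub
    measurable_const

lemma cellG_bdd (m d : ℕ) (hm : 0 < m) (y x p) : |cellG m d y x p| ≤ 1 := by
  have := cellMeas_prob m d hm x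
  unfold cellG
  rw [← cellMeas_apply m d x (measurableSet_box d y)]
  have h1 : (cellMeas m d x).real (anchoredBox d y) ≤ 1 := measureReal_le_one
  have h2 : 0 ≤ (cellMeas m d x).real (anchoredBox d y) := measureReal_nonneg
  rw [abs_le]
  split_ifs <;> constructor <;> linarith

lemma cellG_mean (m d : ℕ) (hm : 0 < m) (y x) :
    ∫ p, cellG m d y x p ∂(cellMeas m d x) = 0 := by
  classical
  have := cellMeas_prob m d hm x
  unfold cellG
  have e : (fun p => @ite ℝ (p ∈ anchoredBox d y) (Classical.propDecidable _) 1 0)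
      = (anchoredBox d y).indicator (fun _ => (1:ℝ)) := by
    ext p; simp [Set.indicator_apply]
  rw [integral_sub]
  · rw [e, integral_indicator_const _ (measurableSet_box d y),
      ← cellMeas_apply m d x (measurableSet_box d y)]
    simp
  · rw [e]
    exact (integrable_const _).indicator (measurableSet_box d y)
  · exact integrable_const _

lemma jdisc_bdd (m d : ℕ) (hm : 0 < m) (y : Fin d → ℝ) (hy : ∀ i, y i < 1)
    (P : (Fin d → Fin m) → (Fin d → ℝ)) :
    |jdisc m d P (anchoredBox d y)| ≤ Fintype.card (Fin d → Fin m) := by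
  rw [jdisc_eq_sum m d hm y hy]
  refine (Finset.abs_sum_le_sum_abs _ _).trans ?_
  refine (Finset.sum_le_sum fun x _ => cellG_bdd m d hm y x (P x)).trans ?_
  simp

lemma starDisc_bddAbove (m d : ℕ) (hm : 0 < m) (P : (Fin d → Fin m) → (Fin d → ℝ)) :
    BddAbove (Set.range fun y : {y : Fin d → ℝ // ∀ i, y i ∈ Set.Ico (0 : ℝ) 1} =>
      |jdisc m d P (anchoredBox d y.1)|) := by
  refine ⟨Fintype.card (Fin d → Fin m), ?_⟩
  rintro _ ⟨y, rfl⟩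
  exact jdisc_bdd m d hm y.1 (fun i => (y.2 i).2) P

lemma le_starDisc (m d : ℕ) (hm : 0 < m) (P : (Fin d → Fin m) → (Fin d → ℝ))
    (y : Fin d → ℝ) (hy : ∀ i, y i ∈ Set.Ico (0 : ℝ) 1) :
    |jdisc m d P (anchoredBox d y)| ≤ starDisc m d P :=
  le_ciSup (starDisc_bddAbove m d hm P) ⟨y, hy⟩

/-- lower rational approximation -/
def lowApprox (n : ℕ) (t : ℝ) : ℚ := ((⌈(n+1 : ℝ) * t⌉₊ - 1 : ℕ) : ℚ) / (n+1)

lemma lowApprox_spec (n : ℕ) (t : ℝ) (ht : 0 ≤ t) :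
    0 ≤ (lowApprox n t : ℝ) ∧ (lowApprox n t : ℝ) ≤ t ∧ t - 1/(n+1) ≤ lowApprox n t ∧
      (0 < t → (lowApprox n t : ℝ) < t) := by
  have hn : (0:ℝ) < n + 1 := by positivity
  unfold lowApprox
  push_cast
  rcases ht.eq_or_lt with h | h
  · subst h
    simp
    positivity
  · have hc : 1 ≤ ⌈(n+1 : ℝ) * t⌉₊ := Nat.one_le_iff_ne_zero.mpr (by
      have : 0 < ⌈(n+1 : ℝ) * t⌉₊ := Nat.ceil_pos.mpr (by positivity)
      omega)
    have h1 : (⌈(n+1 : ℝ) * t⌉₊ : ℝ) < (n+1)*t + 1 := Nat.ceil_lt_add_one (by positivity)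
    have h2 : (n+1)*t ≤ (⌈(n+1 : ℝ) * t⌉₊ : ℝ) := Nat.le_ceil _
    rw [Nat.cast_sub hc]
    have h3 : (((⌈(n+1 : ℝ) * t⌉₊ : ℕ) : ℝ) - ((1:ℕ):ℝ)) / (n+1) < t := by
      rw [div_lt_iff₀ hn]; push_cast; linarith
    refine ⟨?_, h3.le, ?_, fun _ => h3⟩
    · apply div_nonneg _ hn.le
      have : (1:ℝ) ≤ (⌈(n+1 : ℝ) * t⌉₊ : ℝ) := by exact_mod_cast hc
      push_cast; linarith
    · rw [le_div_iff₀ hn]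
      have : (t - 1/(n+1)) * ((n:ℝ)+1) = (n+1)*t - 1 := by field_simp
      rw [this]; push_cast; linarith

lemma lowApprox_tendsto (t : ℝ) (ht : 0 ≤ t) :
    Filter.Tendsto (fun n => (lowApprox n t : ℝ)) Filter.atTop (nhds t) := by
  refine tendsto_of_tendsto_of_tendsto_of_le_of_le (g := fun n : ℕ => t - 1/((n:ℝ)+1))
    (h := fun _ => t) ?_ tendsto_const_nhds (fun n => (lowApprox_spec n t ht).2.2.1)
    (fun n => (lowApprox_spec n t ht).2.1)
  have := (tendsto_const_nhds (x := t)).sub (tendsto_one_div_add_atTop_nhds_zero_nat (𝕜 := ℝ))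
  simpa using this

lemma jdisc_tendsto (m d : ℕ) (y : Fin d → ℝ) (hy : ∀ i, 0 ≤ y i)
    (P : (Fin d → Fin m) → (Fin d → ℝ)) :
    Filter.Tendsto (fun n => jdisc m d P (anchoredBox d fun i => (lowApprox n (y i) : ℝ)))
      Filter.atTop (nhds (jdisc m d P (anchoredBox d y))) := by
  classical
  unfold jdisc
  refine Filter.Tendsto.sub ?_ ?_
  · apply tendsto_nhds_of_eventually_eq
    have key : ∀ x : Fin d → Fin m, ∀ᶠ n in Filter.atTop,
        (P x ∈ anchoredBox d (fun i => (lowApprox n (y i) : ℝ)) ↔ P x ∈ anchoredBox d y) := by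
      intro x
      by_cases hx : P x ∈ anchoredBox d y
      · have : ∀ i, ∀ᶠ n in Filter.atTop, P x i < (lowApprox n (y i) : ℝ) := fun i =>
          (lowApprox_tendsto (y i) (hy i)).eventually_const_lt (hx i (Set.mem_univ i)).2
        filter_upwards [Filter.eventually_all.mpr this] with n hn
        simp only [hx, iff_true]
        exact fun i _ => ⟨(hx i (Set.mem_univ i)).1, hn i⟩
      · refine Filter.Eventually.of_forall fun n => ?_
        simp only [hx, iff_false]
        intro h
        apply hx
        exact fun i hi => ⟨(h i hi).1, (h i hi).2.trans_le (lowApprox_spec n (y i) (hy i)).2.1⟩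
    filter_upwards [Filter.eventually_all.mpr key] with n hn
    simp only [hn]
  · refine Filter.Tendsto.const_mul _ ?_
    rw [box_vol d y hy]
    have : ∀ n, (volume (anchoredBox d fun i => (lowApprox n (y i) : ℝ))).toReal
        = ∏ i, (lowApprox n (y i) : ℝ) := fun n =>
      box_vol d _ (fun i => (lowApprox_spec n (y i) (hy i)).1)
    simp_rw [this]
    exact tendsto_finsetProd _ fun i _ => lowApprox_tendsto (y i) (hy i)

lemma jdisc_measurable (m d : ℕ) (hm : 0 < m) (y : Fin d → ℝ) (hy : ∀ i, y i < 1) :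
    Measurable (fun P => jdisc m d P (anchoredBox d y)) := by
  simp_rw [jdisc_eq_sum m d hm y hy]
  exact Finset.measurable_sum _ fun x _ => (cellG_measurable m d y x).comp (measurable_pi_apply x)

open scoped Classical in
lemma starDisc_eq (m d : ℕ) (hm : 0 < m) (P : (Fin d → Fin m) → (Fin d → ℝ)) :
    starDisc m d P = ⨆ z : Fin d → ℚ, if (∀ i, (z i : ℝ) ∈ Set.Ico (0:ℝ) 1) then
      |jdisc m d P (anchoredBox d fun i => (z i : ℝ))| else 0 := by
  have hb : BddAbove (Set.range fun z : Fin d → ℚ =>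
      if (∀ i, (z i : ℝ) ∈ Set.Ico (0:ℝ) 1) then
      |jdisc m d P (anchoredBox d fun i => (z i : ℝ))| else 0) := by
    refine ⟨Fintype.card (Fin d → Fin m), ?_⟩
    rintro _ ⟨z, rfl⟩
    simp only
    split_ifs with h
    · exact jdisc_bdd m d hm _ (fun i => (h i).2) P
    · positivity
  apply le_antisymm
  · have : Nonempty {y : Fin d → ℝ // ∀ i, y i ∈ Set.Ico (0 : ℝ) 1} :=
      ⟨⟨fun _ => 0, fun _ => by simp⟩⟩
    refine ciSup_le fun y => ?_
    refine le_of_tendsto (jdisc_tendsto m d y.1 (fun i => (y.2 i).1) P).abs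
      (Filter.Eventually.of_forall fun n => ?_)
    refine le_trans ?_ (le_ciSup hb (fun i => lowApprox n (y.1 i)))
    rw [if_pos]
    intro i
    have := lowApprox_spec n (y.1 i) (y.2 i).1
    exact ⟨this.1, this.2.1.trans_lt (y.2 i).2⟩
  · refine ciSup_le fun z => ?_
    split_ifs with h
    · exact le_starDisc m d hm P _ h
    · exact (abs_nonneg _).trans (le_starDisc m d hm P (fun _ => 0) (fun _ => by simp))

lemma starDisc_measurable (m d : ℕ) (hm : 0 < m) : Measurable (starDisc m d) := by
  classical
  have : starDisc m d = fun P => ⨆ z : Fin d → ℚ, if (∀ i, (z i : ℝ) ∈ Set.Ico (0:ℝ) 1) then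
      |jdisc m d P (anchoredBox d fun i => (z i : ℝ))| else 0 := by
    ext P; exact starDisc_eq m d hm P
  rw [this]
  refine Measurable.iSup fun z => ?_
  split_ifs with h
  · exact (jdisc_measurable m d hm _ (fun i => (h i).2)).abs
  · exact measurable_const

lemma starDisc_integrable (m d : ℕ) (hm : 0 < m) :
    Integrable (starDisc m d) (jitterMeasure m d) := by
  have := jitter_prob m d hm
  refine Integrable.of_bound (starDisc_measurable m d hm).aestronglyMeasurable
    (Fintype.card (Fin d → Fin m)) (Filter.Eventually.of_forall fun P => ?_)
  have : Nonempty {y : Fin d → ℝ // ∀ i, y i ∈ Set.Ico (0 : ℝ) 1} :=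
      ⟨⟨fun _ => 0, fun _ => by simp⟩⟩
  rw [Real.norm_eq_abs, abs_of_nonneg]
  · exact ciSup_le fun y => jdisc_bdd m d hm y.1 (fun i => (y.2 i).2) P
  · exact (abs_nonneg _).trans (le_starDisc m d hm P (fun _ => 0) (fun _ => by simp))

lemma half_vol (m d : ℕ) (hm : 0 < m) (x : Fin d → Fin m) (i : Fin d) :
    (m:ℝ)^d * (volume ({p : Fin d → ℝ | p i < ((x i : ℝ) + 1/2) / m} ∩ jitterCube m d x)).toReal
      = 1/2 := by
  have hm' : (0:ℝ) < m := by exact_mod_cast hm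
  have e : {p : Fin d → ℝ | p i < ((x i : ℝ) + 1/2) / m} ∩ jitterCube m d x
      = Set.univ.pi fun k => Set.Ico ((x k : ℝ)/m)
        ((x k : ℝ)/m + (if k = i then 1/(2*(m:ℝ)) else 1/(m:ℝ))) := by
    have hh : ((x i : ℝ) + 1/2) / m = (x i : ℝ)/m + 1/(2*m) := by field_simp
    have hlt : 1/(2*(m:ℝ)) ≤ 1/m := by
      apply one_div_le_one_div_of_le hm'; linarith
    ext p
    constructor
    · rintro ⟨h1, h2⟩ k hk
      have h1' : p i < ((x i : ℝ) + 1/2) / m := h1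
      have := h2 k hk
      refine ⟨this.1, ?_⟩
      split_ifs with h
      · subst h; linarith
      · exact this.2
    · intro h
      refine ⟨?_, ?_⟩
      · have := (h i (Set.mem_univ i)).2
        simp only [if_true] at this
        show p i < _
        linarith
      · intro k hk
        have := h k hk
        refine ⟨this.1, this.2.trans_le ?_⟩
        split_ifs with hki
        · linarith
        · exact le_rfl
  rw [e, Real.volume_pi_Ico_toReal]
  · simp only [add_sub_cancel_left]
    have : (m:ℝ)^d = ∏ k : Fin d, (m:ℝ) := by simp
    rw [this, ← Finset.prod_mul_distrib]
    have : ∀ k : Fin d, (m:ℝ) * (if k = i then 1/(2*(m:ℝ)) else 1/m)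
        = if k = i then 1/2 else 1 := by
      intro k; split_ifs <;> field_simp
    simp_rw [this]
    simp
  · intro k
    show (x k : ℝ)/m ≤ _
    have : (0:ℝ) ≤ if k = i then 1/(2*(m:ℝ)) else 1/m := by split_ifs <;> positivity
    linarith

lemma indep_zero (m d : ℕ) (hm : 0 < m) (c : Fin d → Fin m)
    (F : ((Fin d → Fin m) → (Fin d → ℝ)) → ℝ) (hF : Measurable F)
    (hFc : ∀ P Q, (∀ x, x ≠ c → P x = Q x) → F P = F Q)
    (g : (Fin d → ℝ) → ℝ) (hg : Measurable g) (hg0 : ∫ p, g p ∂(cellMeas m d c) = 0) :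
    ∫ P, F P * g (P c) ∂(jitterMeasure m d) = 0 := by
  classical
  have := cellMeas_prob m d hm
  have hi : iIndepFun (fun x (P : (Fin d → Fin m) → (Fin d → ℝ)) => P x) (jitterMeasure m d) :=
    iIndepFun_pi (μ := cellMeas m d) (X := fun _ p => p) (fun _ => aemeasurable_id)
  have h := hi.indepFun_finset ({c}ᶜ) {c} (disjoint_compl_left)
    (fun x => measurable_pi_apply x)
  let ext' : ((({c}ᶜ : Finset (Fin d → Fin m))) → (Fin d → ℝ)) → ((Fin d → Fin m) → (Fin d → ℝ)) :=
    fun q x => if hx : x ∈ ({c}ᶜ : Finset (Fin d → Fin m)) then q ⟨x, hx⟩ else 0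
  have hext : Measurable ext' := by
    refine measurable_pi_lambda _ fun x => ?_
    by_cases hx : x ∈ ({c}ᶜ : Finset (Fin d → Fin m))
    · simp only [ext', dif_pos hx]; exact measurable_pi_apply _
    · simp only [ext', dif_neg hx]; exact measurable_const
  let gg : (({c} : Finset (Fin d → Fin m)) → (Fin d → ℝ)) → ℝ :=
    fun q => g (q ⟨c, Finset.mem_singleton_self c⟩)
  have hgg : Measurable gg := hg.comp (measurable_pi_apply _)
  have h2 := h.comp (φ := F ∘ ext') (ψ := gg) (hF.comp hext) hgg
  have e1 : ((F ∘ ext') ∘ fun (P : (Fin d → Fin m) → (Fin d → ℝ))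
      (i : ({c}ᶜ : Finset (Fin d → Fin m))) => P i) = F := by
    ext P
    apply hFc
    intro x hx
    have : x ∈ ({c}ᶜ : Finset (Fin d → Fin m)) := by simpa using hx
    simp only [ext', dif_pos this]
  rw [e1] at h2
  have h3 := h2.integral_fun_mul_eq_mul_integral hF.aestronglyMeasurable
    ((hg.comp (measurable_pi_apply c)).aestronglyMeasurable)
  refine h3.trans ?_
  have h4 : ∫ P, g (P c) ∂(jitterMeasure m d) = 0 := by
    have mp := measurePreserving_eval (cellMeas m d) c
    rw [← hg0, ← mp.map_eq, integral_map mp.measurable.aemeasurable hg.aestronglyMeasurable]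
    rfl
  exact mul_eq_zero_of_right _ h4

def cutP (m K : ℕ) : Option (Fin K) → ℝ
  | none => ((m - K : ℕ) : ℝ) / m
  | some j => (((m - K : ℕ) : ℝ) + (j : ℕ) + 1/2) / m

def yOf (m d K : ℕ) (a : Fin d → Option (Fin K)) : Fin d → ℝ := fun i => cutP m K (a i)

lemma yOf_mem (m d K : ℕ) (hK : 0 < K) (hKm : K ≤ m) (a : Fin d → Option (Fin K)) (i) :
    yOf m d K a i ∈ Set.Ico (0:ℝ) 1 := by
  have hm' : (0:ℝ) < m := by exact_mod_cast (by omega : 0 < m)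
  unfold yOf
  cases h : a i with
  | none =>
    simp only [cutP]
    refine ⟨by positivity, ?_⟩
    rw [div_lt_one hm']
    exact_mod_cast (by omega : m - K < m)
  | some j =>
    simp only [cutP]
    refine ⟨by positivity, ?_⟩
    rw [div_lt_one hm']
    have : (m - K) + (j:ℕ) + 1 ≤ m := by have := j.2; omega
    have h2 : ((m - K : ℕ) : ℝ) + (j : ℕ) + 1 ≤ m := by exact_mod_cast this
    linarith

lemma cutP_ge (m K : ℕ) (a : Option (Fin K)) : ((m - K : ℕ) : ℝ) / m ≤ cutP m K a := by
  cases a with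
  | none => exact le_rfl
  | some j =>
    simp only [cutP]
    gcongr
    have : (0:ℝ) ≤ (j:ℕ) := by positivity
    linarith

open scoped Classical in
def slab (m d K : ℕ) (i : Fin d) (j : Fin K) : Finset (Fin d → Fin m) :=
  Finset.univ.filter fun x => (x i : ℕ) = (m - K) + j ∧ ∀ k, k ≠ i → (x k : ℕ) < m - K

lemma mem_slab {m d K : ℕ} {i : Fin d} {j : Fin K} {x : Fin d → Fin m} :
    x ∈ slab m d K i j ↔ ((x i : ℕ) = (m - K) + j ∧ ∀ k, k ≠ i → (x k : ℕ) < m - K) := by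
  simp [slab]

lemma slab_disjoint {m d K : ℕ} {a b : Fin d × Fin K} (h : a ≠ b) :
    Disjoint (slab m d K a.1 a.2) (slab m d K b.1 b.2) := by
  rw [Finset.disjoint_left]
  intro x h1 h2
  rw [mem_slab] at h1 h2
  apply h
  by_cases hi : a.1 = b.1
  · apply Prod.ext hi
    have h3 := h1.1
    rw [hi, h2.1] at h3
    ext; omega
  · have := h2.2 a.1 hi
    omega

lemma slab_card (m d K : ℕ) (hKm : K ≤ m) (i : Fin d) (j : Fin K) :
    (slab m d K i j).card = (m - K)^(d - 1) := by
  classical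
  have hj : (m - K) + (j:ℕ) < m := by have := j.2; omega
  have e : slab m d K i j = Fintype.piFinset (fun k : Fin d =>
      if k = i then {(⟨(m-K) + j, hj⟩ : Fin m)}
      else Finset.univ.filter fun z : Fin m => (z : ℕ) < m - K) := by
    ext x
    rw [mem_slab, Fintype.mem_piFinset]
    constructor
    · rintro ⟨h1, h2⟩ k
      split_ifs with hk
      · subst hk
        rw [Finset.mem_singleton]
        ext; exact h1
      · simpa using h2 k hk
    · intro h
      constructor
      · have := h i
        rw [if_pos rfl, Finset.mem_singleton] at this
        rw [this]
      · intro k hk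
        have := h k
        rw [if_neg hk] at this
        simpa using this
  rw [e, Fintype.card_piFinset]
  have : ∀ k : Fin d, (if k = i then {(⟨(m-K) + j, hj⟩ : Fin m)}
      else Finset.univ.filter fun z : Fin m => (z : ℕ) < m - K).card
      = if k = i then 1 else (m - K) := by
    intro k
    split_ifs
    · simp
    · rw [Fin.card_filter_val_lt]; omega
  simp_rw [this]
  rw [Finset.prod_ite]
  simp [Finset.filter_ne']

open scoped Classical in
def eps (m d : ℕ) (i : Fin d) (c : Fin d → Fin m) (P : (Fin d → Fin m) → (Fin d → ℝ)) : ℝ :=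
  if P c i < ((c i : ℝ) + 1/2) / m then 1 else -1

lemma measurableSet_half (m d : ℕ) (i : Fin d) (c : Fin d → Fin m) :
    MeasurableSet {p : Fin d → ℝ | p i < ((c i : ℝ) + 1/2) / m} :=
  measurableSet_lt (measurable_pi_apply i) measurable_const

lemma eps_measurable (m d : ℕ) (i : Fin d) (c : Fin d → Fin m) : Measurable (eps m d i c) := by
  have h : MeasurableSet {P : (Fin d → Fin m) → (Fin d → ℝ) |
      P c i < ((c i : ℝ) + 1/2) / m} :=
    measurableSet_lt (by fun_prop) measurable_const
  unfold eps
  exact Measurable.ite h measurable_const measurable_const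

lemma eps_pm (m d : ℕ) (i : Fin d) (c : Fin d → Fin m) (P) :
    eps m d i c P = 1 ∨ eps m d i c P = -1 := by
  unfold eps; split_ifs <;> simp

lemma eps_indep (m d : ℕ) (hm : 0 < m) (i : Fin d) :
    iIndepFun (eps m d i) (jitterMeasure m d) := by
  classical
  have := cellMeas_prob m d hm
  exact iIndepFun_pi (μ := cellMeas m d)
    (X := fun c p => @ite ℝ (p i < ((c i : ℝ) + 1/2) / m) (Classical.propDecidable _) 1 (-1))
    (fun c => (Measurable.ite (measurableSet_half m d i c) measurable_const
      measurable_const).aemeasurable)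

lemma eps_mean (m d : ℕ) (hm : 0 < m) (i : Fin d) (c : Fin d → Fin m) :
    ∫ P, eps m d i c P ∂(jitterMeasure m d) = 0 := by
  classical
  have := cellMeas_prob m d hm
  have := jitter_prob m d hm
  have mp := measurePreserving_eval (cellMeas m d) c
  set A : Set (Fin d → ℝ) := {p : Fin d → ℝ | p i < ((c i : ℝ) + 1/2) / m} with hA
  have hAm : MeasurableSet A := measurableSet_half m d i c
  have e : eps m d i c = fun P => (Function.eval c ⁻¹' A).indicator (fun _ => (2:ℝ)) P - 1 := by
    ext P
    by_cases h : P c i < ((c i : ℝ) + 1/2) / m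
    · have h' : P ∈ (Function.eval c ⁻¹' A) := h
      rw [Set.indicator_of_mem h']
      simp only [eps, if_pos h]; norm_num
    · have h' : P ∉ (Function.eval c ⁻¹' A) := h
      rw [Set.indicator_of_notMem h']
      simp only [eps, if_neg h]; norm_num
  have hm2 : MeasurableSet ((Function.eval c : ((Fin d → Fin m) → (Fin d → ℝ)) → _) ⁻¹' A) :=
    (measurable_pi_apply c) hAm
  rw [e, integral_sub ((integrable_const _).indicator hm2) (integrable_const _),
    integral_indicator_const _ hm2]
  have h1 : (jitterMeasure m d).real (Function.eval c ⁻¹' A) = 1/2 := by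
    rw [← half_vol m d hm c i, ← cellMeas_apply m d c hAm, jitterMeasure_eq, Measure.real,
      mp.measure_preimage hAm.nullMeasurableSet, Measure.real]
  rw [h1]
  simp

lemma cellG_of_subset (m d : ℕ) (hm : 0 < m) (y x) (p : Fin d → ℝ) (hp : p ∈ jitterCube m d x)
    (h : jitterCube m d x ⊆ anchoredBox d y) : cellG m d y x p = 0 := by
  have := cellMeas_prob m d hm x
  unfold cellG
  rw [if_pos (h hp), Set.inter_eq_right.mpr h]
  have h1 := cellMeas_apply m d x MeasurableSet.univ
  rw [Set.univ_inter, probReal_univ] at h1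
  rw [← h1]; simp

lemma cellG_of_disjoint (m d : ℕ) (y x) (p : Fin d → ℝ) (hp : p ∈ jitterCube m d x)
    (h : Disjoint (anchoredBox d y) (jitterCube m d x)) : cellG m d y x p = 0 := by
  unfold cellG
  rw [if_neg (fun hb => Set.disjoint_left.mp h hb hp), h.inter_eq]
  simp

lemma cellG_slab (m d K : ℕ) (hm : 0 < m) (i : Fin d) (j : Fin K)
    (a : Fin d → Option (Fin K)) (c : Fin d → Fin m) (hc : c ∈ slab m d K i j)
    (P : (Fin d → Fin m) → (Fin d → ℝ)) (hP : P c ∈ jitterCube m d c) :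
    cellG m d (yOf m d K a) c (P c) = if a i = some j then eps m d i c P / 2 else 0 := by
  have hm' : (0:ℝ) < m := by exact_mod_cast hm
  rw [mem_slab] at hc
  have hci : ((c i : ℕ) : ℝ) = ((m - K : ℕ) : ℝ) + (j:ℕ) := by exact_mod_cast hc.1
  -- other coordinates are never cut
  have hoth : ∀ p ∈ jitterCube m d c, ∀ k, k ≠ i → p k ∈ Set.Ico 0 (yOf m d K a k) := by
    intro p hp k hk
    have h1 := hp k (Set.mem_univ k)
    refine ⟨le_trans (by positivity) h1.1, h1.2.trans_le ?_⟩
    refine le_trans ?_ (cutP_ge m K (a k))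
    rw [← add_div]
    gcongr
    exact_mod_cast hc.2 k hk
  have hnn : ∀ p ∈ jitterCube m d c, ∀ k, 0 ≤ p k := fun p hp k =>
    le_trans (by positivity) (hp k (Set.mem_univ k)).1
  have hempty : yOf m d K a i ≤ (c i : ℝ) / m → cellG m d (yOf m d K a) c (P c) = 0 := by
    intro h
    apply cellG_of_disjoint _ _ _ _ _ hP
    rw [Set.disjoint_left]
    intro p h1 h2
    have h3 := (h1 i (Set.mem_univ i)).2
    have h4 := (h2 i (Set.mem_univ i)).1
    linarith
  cases hai : a i with
  | none =>
    rw [if_neg (by simp)]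
    apply hempty
    simp only [yOf, hai, cutP]
    rw [hci]
    refine div_le_div_of_nonneg_right ?_ hm'.le
    have : (0:ℝ) ≤ (j:ℕ) := by positivity
    linarith
  | some j' =>
    have hy : yOf m d K a i = (((m - K : ℕ) : ℝ) + (j' : ℕ) + 1/2) / m := by
      simp only [yOf, hai, cutP]
    rcases lt_trichotomy j' j with hlt | heq | hgt
    · rw [if_neg (by simpa using hlt.ne)]
      apply hempty
      rw [hy, hci]
      refine div_le_div_of_nonneg_right ?_ hm'.le
      have : ((j':ℕ):ℝ) + 1 ≤ (j:ℕ) := by exact_mod_cast hlt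
      linarith
    · subst heq
      rw [if_pos rfl]
      rw [← hci] at hy
      have hmem : ∀ p ∈ jitterCube m d c, (p ∈ anchoredBox d (yOf m d K a) ↔
          p i < ((c i : ℝ) + 1/2) / m) := by
        intro p hp
        constructor
        · intro h
          rw [← hy]
          exact (h i (Set.mem_univ i)).2
        · intro h k _
          by_cases hk : k = i
          · subst hk
            exact ⟨hnn p hp k, by rw [hy]; exact h⟩
          · exact hoth p hp k hk
      have e : anchoredBox d (yOf m d K a) ∩ jitterCube m d c
          = {p : Fin d → ℝ | p i < ((c i : ℝ) + 1/2) / m} ∩ jitterCube m d c := by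
        ext p
        constructor
        · rintro ⟨h1, h2⟩
          exact ⟨(hmem p h2).mp h1, h2⟩
        · rintro ⟨h1, h2⟩
          exact ⟨(hmem p h2).mpr h1, h2⟩
      unfold cellG
      rw [e, half_vol m d hm c i]
      by_cases h : P c i < ((c i : ℝ) + 1/2) / m
      · rw [if_pos ((hmem _ hP).mpr h), eps, if_pos h]; norm_num
      · rw [if_neg (fun hb => h ((hmem _ hP).mp hb)), eps, if_neg h]; norm_num
    · rw [if_neg (by simpa using hgt.ne')]
      apply cellG_of_subset m d hm _ _ _ hP
      intro p hp k _
      by_cases hk : k = i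
      · subst hk
        refine ⟨hnn p hp k, (hp k (Set.mem_univ k)).2.trans_le ?_⟩
        show _ ≤ yOf m d K a k
        rw [hy, ← add_div, hci]
        refine div_le_div_of_nonneg_right ?_ hm'.le
        have : ((j:ℕ):ℝ) + 1 ≤ (j':ℕ) := by exact_mod_cast hgt
        linarith
      · exact hoth p hp k hk

open scoped Classical in
/-- choice of a cut from the bits telling which slabs exceed the threshold -/
def selJ {d K : ℕ} (b : Fin d → Fin K → Bool) (i : Fin d) : Option (Fin K) :=
  if h : ∃ j, b i j = true then some h.choose else none

open scoped Classical in
def bits (m d K : ℕ) (t : ℝ) (P : (Fin d → Fin m) → (Fin d → ℝ)) : Fin d → Fin K → Bool :=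
  fun i j => decide (t ≤ ∑ c ∈ slab m d K i j, eps m d i c P)

lemma bits_measurable (m d K : ℕ) (t : ℝ) : Measurable (bits m d K t) := by
  classical
  refine measurable_pi_lambda _ fun i => measurable_pi_lambda _ fun j => ?_
  refine measurable_to_bool ?_
  have : (fun P => bits m d K t P i j) ⁻¹' {true}
      = {P | t ≤ ∑ c ∈ slab m d K i j, eps m d i c P} := by
    ext P; simp [bits]
  rw [this]
  exact measurableSet_le measurable_const
    (Finset.measurable_sum _ fun c _ => eps_measurable m d i c)

open scoped Classical in
def selF (m d K : ℕ) (t : ℝ) (a : Fin d → Option (Fin K))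
    (P : (Fin d → Fin m) → (Fin d → ℝ)) : ℝ :=
  if selJ (bits m d K t P) = a then 1 else 0

open scoped Classical in
lemma selF_measurable (m d K : ℕ) (t : ℝ) (a) : Measurable (selF m d K t a) := by
  exact (Measurable.of_discrete (f := fun b : Fin d → Fin K → Bool =>
    if selJ b = a then (1:ℝ) else 0)).comp (bits_measurable m d K t)

open scoped Classical in
def core (m d K : ℕ) : Finset (Fin d → Fin m) :=
  (Finset.univ : Finset (Fin d × Fin K)).biUnion fun ij => slab m d K ij.1 ij.2

lemma selF_indep (m d K : ℕ) (t : ℝ) (a) (c : Fin d → Fin m) (hc : c ∉ core m d K)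
    (P Q : (Fin d → Fin m) → (Fin d → ℝ)) (h : ∀ x, x ≠ c → P x = Q x) :
    selF m d K t a P = selF m d K t a Q := by
  classical
  have : bits m d K t P = bits m d K t Q := by
    ext i j
    unfold bits
    have : ∑ c ∈ slab m d K i j, eps m d i c P = ∑ c ∈ slab m d K i j, eps m d i c Q := by
      refine Finset.sum_congr rfl fun x hx => ?_
      have hxc : x ≠ c := by
        rintro rfl
        exact hc (Finset.mem_biUnion.mpr ⟨(i, j), Finset.mem_univ _, hx⟩)
      unfold eps
      rw [h x hxc]
    rw [this]
  unfold selF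
  rw [this]

lemma core_sum (m d K : ℕ) (hm : 0 < m) (t : ℝ) 
    (P : (Fin d → Fin m) → (Fin d → ℝ)) (hP : ∀ c, P c ∈ jitterCube m d c) :
    ∑ i, {P | ∃ j : Fin K, t ≤ ∑ c ∈ slab m d K i j, eps m d i c P}.indicator (fun _ => t/2) P
      ≤ ∑ c ∈ core m d K, cellG m d (yOf m d K (selJ (bits m d K t P))) c (P c) := by
  classical
  unfold core
  rw [Finset.sum_biUnion (fun a _ b _ hab => slab_disjoint hab), Fintype.sum_prod_type]
  refine Finset.sum_le_sum fun i _ => ?_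
  have e : ∀ j : Fin K, ∑ c ∈ slab m d K i j,
      cellG m d (yOf m d K (selJ (bits m d K t P))) c (P c)
      = if selJ (bits m d K t P) i = some j then (∑ c ∈ slab m d K i j, eps m d i c P) / 2
        else 0 := by
    intro j
    rw [Finset.sum_congr rfl fun c hc => cellG_slab m d K hm i j _ c hc P (hP c)]
    split_ifs
    · rw [Finset.sum_div]
    · simp
  simp only [e]
  by_cases h : ∃ j : Fin K, t ≤ ∑ c ∈ slab m d K i j, eps m d i c P
  · rw [Set.indicator_of_mem (by exact h)]
    have hb : ∃ j, bits m d K t P i j = true := by simpa [bits] using h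
    have hs : selJ (bits m d K t P) i = some hb.choose := by
      unfold selJ; rw [dif_pos hb]
    have hch := hb.choose_spec
    simp only [hs, Option.some.injEq]
    rw [Finset.sum_ite_eq]
    simp only [Finset.mem_univ, if_true]
    have : t ≤ ∑ c ∈ slab m d K i hb.choose, eps m d i c P := by
      simpa [bits] using hch
    linarith
  · rw [Set.indicator_of_notMem (by exact h)]
    have hb : ¬ ∃ j, bits m d K t P i j = true := by simpa [bits] using h
    have hs : selJ (bits m d K t P) i = none := by
      unfold selJ; rw [dif_neg hb]
    simp [hs]

lemma ae_mem_cubes (m d : ℕ) (hm : 0 < m) :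
    ∀ᵐ P ∂(jitterMeasure m d), ∀ c, P c ∈ jitterCube m d c := by
  have := cellMeas_prob m d hm
  rw [ae_all_iff]
  intro c
  have mp := measurePreserving_eval (cellMeas m d) c
  have h : ∀ᵐ p ∂(cellMeas m d c), p ∈ jitterCube m d c :=
    Measure.ae_smul_measure (ae_restrict_mem (measurableSet_cube m d c)) _
  exact mp.quasiMeasurePreserving.ae h

lemma main_lower (m d K : ℕ) (hK : Real.exp 6 ≤ K) (hKm : K ≤ m) (hKn : K ≤ (m-K)^(d-1)) :
    d * (√(((m-K)^(d-1) : ℕ) * Real.log K) / 160) ≤ expStarDisc m d := by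
  classical
  have hK0 : 0 < K := by
    have : (0:ℝ) < K := lt_of_lt_of_le (Real.exp_pos 6) hK
    exact_mod_cast this
  have hm : 0 < m := by omega
  have := jitter_prob m d hm
  set μ := jitterMeasure m d with hμ
  set t : ℝ := √(((m-K)^(d-1) : ℕ) * Real.log K) / 40 with ht
  have ht0 : 0 ≤ t := by positivity
  let E : Fin d → Set ((Fin d → Fin m) → (Fin d → ℝ)) := fun i =>
    {P | ∃ j : Fin K, t ≤ ∑ c ∈ slab m d K i j, eps m d i c P}
  have hEm : ∀ i, MeasurableSet (E i) := by
    intro i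
    have : E i = ⋃ j : Fin K, {P | t ≤ ∑ c ∈ slab m d K i j, eps m d i c P} := by
      ext P; simp [E]
    rw [this]
    exact MeasurableSet.iUnion fun j => measurableSet_le measurable_const
      (Finset.measurable_sum _ fun c _ => eps_measurable m d i c)
  have hE : ∀ i, 1/2 ≤ μ.real (E i) := fun i =>
    some_exceed (eps_indep m d hm i) (eps_measurable m d i) (eps_pm m d i) (eps_mean m d hm i)
      K ((m-K)^(d-1)) hK hKn (slab m d K i)
      (fun a b hab => slab_disjoint (a := (i, a)) (b := (i, b)) (by simpa using hab))
      (fun j => slab_card m d K hKm i j)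
  let R : (Fin d → Fin m) → (Fin d → Option (Fin K)) → ((Fin d → Fin m) → (Fin d → ℝ)) → ℝ :=
    fun c a P => selF m d K t a P * cellG m d (yOf m d K a) c (P c)
  have hRint : ∀ c a, Integrable (R c a) μ := by
    intro c a
    refine Integrable.of_bound ((selF_measurable m d K t a).mul
      ((cellG_measurable m d _ c).comp (measurable_pi_apply c))).aestronglyMeasurable 1
      (Filter.Eventually.of_forall fun P => ?_)
    rw [Real.norm_eq_abs, abs_mul]
    refine mul_le_one₀ ?_ (abs_nonneg _) (cellG_bdd m d hm _ c _)
    unfold selF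
    split_ifs <;> simp
  have hR0 : ∀ c ∉ core m d K, ∀ a, ∫ P, R c a P ∂μ = 0 := fun c hc a =>
    indep_zero m d hm c (selF m d K t a) (selF_measurable m d K t a)
      (selF_indep m d K t a c hc) _ (cellG_measurable m d _ c) (cellG_mean m d hm _ c)
  have hIE : ∀ i, Integrable ((E i).indicator (fun _ => t/2)) μ := fun i =>
    (integrable_const _).indicator (hEm i)
  have hint1 : Integrable (fun P => ∑ i, (E i).indicator (fun _ => t/2) P) μ :=
    integrable_finsetSum _ fun i _ => hIE i
  have hint2 : Integrable (fun P => ∑ c ∈ (core m d K)ᶜ, ∑ a, R c a P) μ :=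
    integrable_finsetSum _ fun c _ => integrable_finsetSum _ fun a _ => hRint c a
  have hmono : ∫ P, (∑ i, (E i).indicator (fun _ => t/2) P
      + ∑ c ∈ (core m d K)ᶜ, ∑ a, R c a P) ∂μ ≤ expStarDisc m d := by
    refine integral_mono_ae (hint1.add hint2) (starDisc_integrable m d hm) ?_
    filter_upwards [ae_mem_cubes m d hm] with P hP
    have hy := yOf_mem m d K hK0 hKm (selJ (bits m d K t P))
    refine le_trans ?_ ((le_abs_self _).trans (le_starDisc m d hm P _ hy))
    rw [jdisc_eq_sum m d hm _ (fun i => (hy i).2), ← Finset.sum_add_sum_compl (core m d K)]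
    refine add_le_add (core_sum m d K hm t P hP) (le_of_eq ?_)
    refine Finset.sum_congr rfl fun c _ => ?_
    simp only [R, selF, ite_mul, one_mul, zero_mul]
    rw [Finset.sum_ite_eq]
    simp
  rw [integral_add hint1 hint2, integral_finsetSum _ (fun i _ => hIE i),
    integral_finsetSum _ (fun c _ => integrable_finsetSum _ fun a _ => hRint c a)] at hmono
  have hz : ∑ c ∈ (core m d K)ᶜ, ∫ P, ∑ a, R c a P ∂μ = 0 := by
    refine Finset.sum_eq_zero fun c hc => ?_
    rw [integral_finsetSum _ (fun a _ => hRint c a)]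
    exact Finset.sum_eq_zero fun a _ => hR0 c (by simpa using hc) a
  rw [hz, add_zero] at hmono
  refine le_trans ?_ hmono
  have : ∀ i : Fin d, t/4 ≤ ∫ P, (E i).indicator (fun _ => t/2) P ∂μ := by
    intro i
    rw [integral_indicator_const _ (hEm i), smul_eq_mul]
    nlinarith [hE i]
  calc (d:ℝ) * (√(((m-K)^(d-1) : ℕ) * Real.log K) / 160) = ∑ i : Fin d, t/4 := by
        rw [Finset.sum_const, Finset.card_univ, Fintype.card_fin, nsmul_eq_mul, ht]; ring
    _ ≤ _ := Finset.sum_le_sum fun i _ => this i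

/-- There is a constant `C > 0` such that for all `m, d ≥ 2` with `⌊m/d⌋ ≥ e^6`, a jittered
sampling point set of `N = m^d` points in `[0,1)^d` satisfies
`E[D*(P)] ≥ C·√(d·m^d)·√((1 + log(m/d))/(m/d))`. -/
theorem jittered_sampling_lower_bound_large_ratio :
    ∃ C : ℝ, 0 < C ∧
      ∀ m d : ℕ, 2 ≤ m → 2 ≤ d → Real.exp 6 ≤ ((m / d : ℕ) : ℝ) →
        C * Real.sqrt ((d : ℝ) * (m : ℝ) ^ d) *
            Real.sqrt ((1 + Real.log ((m : ℝ) / d)) / ((m : ℝ) / d))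
          ≤ expStarDisc m d := by
  refine ⟨1/480, by norm_num, ?_⟩
  intro m d hm2 hd2 hK
  set K : ℕ := m / d with hKdef
  have hKd : K * d ≤ m := Nat.div_mul_le_self m d
  have h2K : 2 * K ≤ m := by nlinarith
  have hmK : m < (K + 1) * d := by
    have := Nat.lt_mul_div_succ m (by omega : 0 < d)
    rw [← hKdef] at this
    linarith [mul_comm d (K+1)]
  have hK0R : (0:ℝ) < K := lt_of_lt_of_le (Real.exp_pos 6) hK
  have hK0 : 0 < K := by exact_mod_cast hK0R
  obtain ⟨q, rfl⟩ : ∃ q, d = q + 2 := ⟨d - 2, by omega⟩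
  have hKn : K ≤ (m-K)^(q + 2 - 1) := by
    calc K ≤ m - K := by omega
      _ ≤ (m-K)^(q+2-1) := Nat.le_self_pow (by omega) _
  refine le_trans ?_ (main_lower m (q+2) K hK (by omega) hKn)
  have hm0 : (0:ℝ) < m := by exact_mod_cast (by omega : 0 < m)
  have hL : 6 ≤ Real.log K := (Real.le_log_iff_exp_le hK0R).mpr hK
  set D : ℝ := ((q + 2 : ℕ) : ℝ) with hD
  have hD0 : 0 < D := by rw [hD]; positivity
  have hlog : 1 + Real.log ((m:ℝ)/D) ≤ 2 * Real.log K := by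
    have h1 : (m:ℝ)/D ≤ 2 * K := by
      rw [div_le_iff₀ hD0]
      have : (m:ℝ) < (K + 1) * D := by rw [hD]; exact_mod_cast hmK
      have hK1 : (1:ℝ) ≤ K := by exact_mod_cast hK0
      nlinarith
    have h2 : Real.log ((m:ℝ)/D) ≤ Real.log (2 * K) := Real.log_le_log (by positivity) h1
    rw [Real.log_mul (by norm_num) hK0R.ne'] at h2
    have := Real.log_two_lt_d9
    linarith
  have hpow : (m:ℝ)^(q+1) ≤ 3 * (((m-K)^(q+2-1) : ℕ) : ℝ) := by
    have hc : ((m - K : ℕ) : ℝ) = (m:ℝ) - K := by rw [Nat.cast_sub (by omega)]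
    have hq : (0:ℝ) < (q:ℝ) + 1 := by positivity
    have h1 : (m:ℝ) ≤ ((m:ℝ) - K) * (1 + 1/((q:ℝ)+1)) := by
      have h3 : (K:ℝ) * (q + 2) ≤ m := by exact_mod_cast hKd
      have : ((m:ℝ) - K) * (1 + 1/((q:ℝ)+1)) = ((m:ℝ) - K) * (q+2) / (q+1) := by
        field_simp; ring
      rw [this, le_div_iff₀ hq]
      nlinarith
    have hmK0 : (0:ℝ) ≤ (m:ℝ) - K := by rw [← hc]; positivity
    have h2 : (1 + 1/((q:ℝ)+1))^(q+1) ≤ 3 := by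
      have h4 : 1 + 1/((q:ℝ)+1) ≤ Real.exp (1/((q:ℝ)+1)) := by
        have := Real.add_one_le_exp (1/((q:ℝ)+1)); linarith
      calc (1 + 1/((q:ℝ)+1))^(q+1) ≤ (Real.exp (1/((q:ℝ)+1)))^(q+1) := by gcongr
        _ = Real.exp 1 := by
          rw [← Real.exp_nat_mul]; congr 1; push_cast; field_simp
        _ ≤ 3 := by have := Real.exp_one_lt_d9; linarith
    calc (m:ℝ)^(q+1) ≤ (((m:ℝ) - K) * (1 + 1/((q:ℝ)+1)))^(q+1) := by gcongr
      _ = ((m:ℝ) - K)^(q+1) * (1 + 1/((q:ℝ)+1))^(q+1) := mul_pow _ _ _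
      _ ≤ ((m:ℝ) - K)^(q+1) * 3 := by gcongr
      _ = 3 * (((m-K)^(q+2-1) : ℕ) : ℝ) := by
        push_cast
        rw [hc, mul_comm]
  set n : ℝ := (((m-K)^(q+2-1) : ℕ) : ℝ) with hn
  have hn0 : 0 ≤ n := by rw [hn]; positivity
  have hlog0 : 0 ≤ 1 + Real.log ((m:ℝ)/D) := by
    have : 1 ≤ (m:ℝ)/D := by
      rw [le_div_iff₀ hD0, hD]
      have : q + 2 ≤ m := by nlinarith
      rw [one_mul]; exact_mod_cast this
    have := Real.log_nonneg this
    linarith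
  have hs : √(D * (m:ℝ)^(q+2)) * √((1 + Real.log ((m:ℝ)/D)) / ((m:ℝ)/D))
      ≤ 3 * (D * √(n * Real.log K)) := by
    rw [← Real.sqrt_mul (by positivity)]
    apply Real.sqrt_le_iff.mpr
    constructor
    · positivity
    · rw [mul_pow, mul_pow, Real.sq_sqrt (by positivity)]
      have e : D * (m:ℝ)^(q+2) * ((1 + Real.log ((m:ℝ)/D)) / ((m:ℝ)/D))
          = D^2 * ((m:ℝ)^(q+1) * (1 + Real.log ((m:ℝ)/D))) := by
        generalize 1 + Real.log ((m:ℝ)/D) = w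
        field_simp
        try ring
      rw [e]
      have h5 : (m:ℝ)^(q+1) * (1 + Real.log ((m:ℝ)/D)) ≤ (3 * n) * (2 * Real.log K) := by gcongr
      have h6 : 0 ≤ n * Real.log K := by positivity
      calc D^2 * ((m:ℝ)^(q+1) * (1 + Real.log ((m:ℝ)/D))) ≤ D^2 * ((3 * n) * (2 * Real.log K)) := by
            gcongr
        _ = 6 * (D^2 * (n * Real.log K)) := by ring
        _ ≤ 3^2 * (D^2 * (n * Real.log K)) := by
            have : 0 ≤ D^2 * (n * Real.log K) := by positivity
            linarith
  rw [mul_assoc]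
  calc 1/480 * (√(D * (m:ℝ)^(q+2)) * √((1 + Real.log ((m:ℝ)/D)) / ((m:ℝ)/D)))
      ≤ 1/480 * (3 * (D * √(n * Real.log K))) := by gcongr
    _ = D * (√(n * Real.log K) / 160) := by ring
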